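/- arXiv:2105.06924 — 2 statements merged into one kernel-verified Lean document; each statement's English description precedes it below -/
import Mathlib

section
/- Tensor singular value decomposition (c-SVD): every tensor A ∈ ℝ^{n1×n2×n3} can be factored as A = U ⋆_c S ⋆_c Vᵀ, i.e. there exist tensors U ∈ ℝ^{n1×n1×n3}, S ∈ ℝ^{n1×n2×n3} and V ∈ ℝ^{n2×n2×n3} such that mat(A) = mat(U)·mat(S)·mat(V)ᵀ, the matrices mat(U) and mat(V) are orthogonal (mat(U)ᵀmat(U) = I and mat(V)ᵀmat(V) = I), and S is f-diagonal (every frontal slice S^{(k)} is a diagonal matrix). -/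
open Matrix BigOperators Kronecker

noncomputable section

/-- The `n × n` discrete cosine transform (DCT) matrix, with 0-based indexing of the 1-based
formula `(C_n)_{ij} = √((2−δ_{i1})/n)·cos((i−1)(2j−1)π/(2n))`. -/
def dctMatrix (n : ℕ) : Matrix (Fin n) (Fin n) ℝ :=
  Matrix.of fun i j =>
    Real.sqrt ((2 - if (i : ℕ) = 0 then 1 else 0) / n) *
      Real.cos ((i : ℝ) * (2 * (j : ℝ) + 1) * Real.pi / (2 * n))

/-- The `n × n` upshift matrix `Z`, with ones on the first superdiagonal. -/
def upshift (n : ℕ) : Matrix (Fin n) (Fin n) ℝ :=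
  Matrix.of fun i j => if (i : ℕ) + 1 = (j : ℕ) then 1 else 0

/-- `W = diag(C_n(:,1))`, the diagonal matrix whose diagonal is the first column of the DCT
matrix. -/
def Wdiag (n : ℕ) : Matrix (Fin n) (Fin n) ℝ :=
  Matrix.diagonal fun i => dctMatrix n i ⟨0, i.pos⟩

/-- The `n × n` transform matrix `M = W⁻¹ C_n (I + Z)`. -/
def transformM (n : ℕ) : Matrix (Fin n) (Fin n) ℝ :=
  (Wdiag n)⁻¹ * dctMatrix n * (1 + upshift n)

/-- The Hankel part `H_{p,q}` of the `(p,q)` block of `mat(A)` (0-based indices: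
the 1-based conditions `p+q ≤ n3`, `p+q = n3+1`, `p+q ≥ n3+2` become
`p+q+1 < n3`, `p+q+1 = n3` and `p+q+1 > n3`, with blocks `A^{(p+q+1)}` resp. `0`
resp. `A^{(2·n3−(p+q)−1)}` in 0-based numbering of the slices). -/
def hankelPart {n1 n2 n3 : ℕ} (A : Fin n3 → Matrix (Fin n1) (Fin n2) ℝ) (p q : Fin n3) :
    Matrix (Fin n1) (Fin n2) ℝ :=
  if h : p.val + q.val + 1 < n3 then A ⟨p.val + q.val + 1, h⟩
  else if h' : p.val + q.val + 1 = n3 then 0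
  else A ⟨2 * n3 - (p.val + q.val) - 1, by
    have hp := p.isLt; have hq := q.isLt; omega⟩

/-- `mat(A)`: the block Toeplitz-plus-Hankel matrix associated with a third-order tensor `A`,
identified with the tuple of its frontal slices.  Rows are indexed by `Fin n3 × Fin n1`
(block row, row within block) and columns by `Fin n3 × Fin n2`. -/
def tmat {n1 n2 n3 : ℕ} (A : Fin n3 → Matrix (Fin n1) (Fin n2) ℝ) :
    Matrix (Fin n3 × Fin n1) (Fin n3 × Fin n2) ℝ :=
  Matrix.of fun pi qj =>
    (A ⟨Nat.dist pi.1.val qj.1.val, by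
        have hp := pi.1.isLt; have hq := qj.1.isLt
        simp only [Nat.dist]; omega⟩ + hankelPart A pi.1 qj.1) pi.2 qj.2

/-- The `p`-th transformed slice `Ã^{(p)} = Σ_q M_{pq} A^{(q)}` of a tensor `A`. -/
def tSlice {n1 n2 n3 : ℕ} (A : Fin n3 → Matrix (Fin n1) (Fin n2) ℝ) (p : Fin n3) :
    Matrix (Fin n1) (Fin n2) ℝ :=
  ∑ q, transformM n3 p q • A q

/-- Toeplitz-plus-Hankel matrix `th(v)` of a vector `v ∈ ℝⁿ` (0-based indexing of the 1-based
formula of the paper). -/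
def thMat {n : ℕ} (v : Fin n → ℝ) : Matrix (Fin n) (Fin n) ℝ :=
  Matrix.of fun p q =>
    v ⟨Nat.dist p.val q.val, by
        have hp := p.isLt; have hq := q.isLt; simp only [Nat.dist]; omega⟩ +
    (if h : p.val + q.val + 1 < n then v ⟨p.val + q.val + 1, h⟩
     else if h' : p.val + q.val + 1 = n then 0
     else v ⟨2 * n - (p.val + q.val) - 1, by
       have hp := p.isLt; have hq := q.isLt; omega⟩)

/-- The product `a ⊛ B` of a tube `a ∈ ℝ^{1×1×n3}` (identified with a vector of `ℝ^{n3}`) with a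
tensor `B`: the tensor whose transformed slices are `(a ⊛ B)~^{(p)} = (M a)_p • B̃^{(p)}`. -/
def tubeSMul {n1 n2 n3 : ℕ} (a : Fin n3 → ℝ) (B : Fin n3 → Matrix (Fin n1) (Fin n2) ℝ) :
    Fin n3 → Matrix (Fin n1) (Fin n2) ℝ :=
  fun t => ∑ p, (transformM n3)⁻¹ t p • ((transformM n3).mulVec a p • tSlice B p)

/-- The c-product `a ⋆_c b` of two tubes: the tube whose transform is the componentwise product
of the transforms, `M (a ⋆_c b) = (M a) .* (M b)`. -/
def tubeCMul {n3 : ℕ} (a b : Fin n3 → ℝ) : Fin n3 → ℝ :=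
  (transformM n3)⁻¹.mulVec fun p => (transformM n3).mulVec a p * (transformM n3).mulVec b p

/-- Frobenius norm of a real matrix. -/
def frobNorm {m n : ℕ} (B : Matrix (Fin m) (Fin n) ℝ) : ℝ :=
  Real.sqrt (∑ i, ∑ j, (B i j) ^ 2)

/-- Frobenius norm of a third-order tensor. -/
def tFrobNorm {n1 n2 n3 : ℕ} (A : Fin n3 → Matrix (Fin n1) (Fin n2) ℝ) : ℝ :=
  Real.sqrt (∑ k, ∑ i, ∑ j, (A k i j) ^ 2)

/-- The `i`-th lateral slice `U(:,i,:)` of a tensor `U`: the `n1 × 1 × n3` tensor whose `k`-th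
frontal slice is the `i`-th column of `U^{(k)}`. -/
def lateralSlice {n1 n2 n3 : ℕ} (U : Fin n3 → Matrix (Fin n1) (Fin n2) ℝ) (i : Fin n2) :
    Fin n3 → Matrix (Fin n1) (Fin 1) ℝ :=
  fun k => Matrix.of fun r _ => U k r i

/-- The `(i,j)` tube `S(i,j,:)` of a tensor `S`: the `1 × 1 × n3` tensor whose `k`-th frontal
slice is the `(i,j)` entry of `S^{(k)}`. -/
def entryTube {n1 n2 n3 : ℕ} (S : Fin n3 → Matrix (Fin n1) (Fin n2) ℝ) (i : Fin n1) (j : Fin n2) :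
    Fin n3 → Matrix (Fin 1) (Fin 1) ℝ :=
  fun k => Matrix.of fun _ _ => S k i j

/-- Slicewise transpose of a tensor. -/
def sTranspose {n1 n2 n3 : ℕ} (A : Fin n3 → Matrix (Fin n1) (Fin n2) ℝ) :
    Fin n3 → Matrix (Fin n2) (Fin n1) ℝ :=
  fun k => (A k)ᵀ

/-- `TVect(A)`: stacking the lateral slices of `A` one below the other; the `k`-th frontal slice
of `TVect(A)` is obtained by stacking the columns of `A^{(k)}` (entry `r = j·n1 + i` is
`A^{(k)}_{i,j}`). -/
def tvect {n1 n2 n3 : ℕ} (A : Fin n3 → Matrix (Fin n1) (Fin n2) ℝ) :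
    Fin n3 → Matrix (Fin (n1 * n2)) (Fin 1) ℝ :=
  fun k => Matrix.of fun r _ =>
    A k ⟨r.val % n1, Nat.mod_lt _ (Nat.pos_of_ne_zero fun h0 => absurd r.isLt (by simp [h0]))⟩
        ⟨r.val / n1, Nat.div_lt_of_lt_mul r.isLt⟩

/-!
Extended evenly to the cycle `ℤ/2n`, a vector `v` turns `thMat v` into a cyclic convolution acting
on the functions invariant under the reflection `x ↦ -1 - x`. The rows of the DCT matrix `C` are the
cosines `cos (kπx/n + kπ/(2n))` having this symmetry, and they are eigenvectors of every convolution
with an even function. Comparing first columns identifies the eigenvalues as the entries of `M v`,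
where `M` is the transform matrix `W⁻¹ C (I + Z)`. With `Pₖ` the orthogonal projection onto the
`k`-th cosine, this gives `mat(A) = ∑ₖ Pₖ ⊗ Ã⁽ᵏ⁾`, so that products, transposes and orthogonality of
block matrices `mat(A)` are decided slice by slice after the transform. An ordinary singular value
decomposition of each `Ã⁽ᵏ⁾` then lifts to the tensors because `M` is invertible, and diagonality of
the slices is preserved because `M` acts on each tube separately.
-/

section SingularValueDecomposition

variable {𝕜 : Type*} [RCLike 𝕜]
  {E : Type*} [NormedAddCommGroup E] [InnerProductSpace 𝕜 E] [FiniteDimensional 𝕜 E]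
  {F : Type*} [NormedAddCommGroup F] [InnerProductSpace 𝕜 F] [FiniteDimensional 𝕜 F]

theorem inner_map_eigenvectorBasis_adjoint_comp_self (T : E →ₗ[𝕜] F) {n : ℕ}
    (hn : Module.finrank 𝕜 E = n) (i j : Fin n) :
    inner 𝕜 (T (T.isSymmetric_adjoint_comp_self.eigenvectorBasis hn i))
        (T (T.isSymmetric_adjoint_comp_self.eigenvectorBasis hn j)) =
      if i = j then (T.singularValues j : 𝕜) ^ 2 else 0 := by
  rw [← LinearMap.adjoint_inner_right, ← LinearMap.comp_apply,
    LinearMap.IsSymmetric.apply_eigenvectorBasis, inner_smul_right,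
    OrthonormalBasis.inner_eq_ite, ← T.sq_singularValues_fin hn]
  simp

theorem map_eigenvectorBasis_adjoint_comp_self_eq_zero (T : E →ₗ[𝕜] F) {n : ℕ}
    (hn : Module.finrank 𝕜 E = n) (j : Fin n) (hj : Module.finrank 𝕜 F ≤ j) :
    T (T.isSymmetric_adjoint_comp_self.eigenvectorBasis hn j) = 0 := by
  -- The singular values are listed in decreasing order, so the nonzero ones come first.
  have hσ : T.singularValues j = 0 :=
    T.singularValues_eq_zero_iff_le_finrank_range.2 (T.range.finrank_le.trans hj)
  rw [← inner_self_eq_zero (𝕜 := 𝕜), inner_map_eigenvectorBasis_adjoint_comp_self, hσ]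
  simp

theorem exists_orthonormalBasis_inner_eq_zero {ι : Type*} [Fintype ι]
    (hι : Module.finrank 𝕜 F = Fintype.card ι) {f : ι → F}
    (hf : Pairwise fun i j => inner 𝕜 (f i) (f j) = 0) :
    ∃ b : OrthonormalBasis ι 𝕜 F, Pairwise fun i j => inner 𝕜 (b i) (f j) = 0 := by
  have hnormalized : Orthonormal 𝕜 ({i | f i ≠ 0}.domRestrict fun i => (‖f i‖⁻¹ : 𝕜) • f i) :=
    ⟨fun i => norm_smul_inv_norm i.2, fun i j hij => by
      simp [inner_smul_left, inner_smul_right, hf (Subtype.coe_injective.ne hij)]⟩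
  obtain ⟨b, hb⟩ := hnormalized.exists_orthonormalBasis_extension_of_card_eq hι
  refine ⟨b, fun i j hij => ?_⟩
  rcases eq_or_ne (f j) 0 with hj | hj
  · rw [hj, inner_zero_right]
  · have hbij : (‖f j‖⁻¹ : 𝕜) * inner 𝕜 (b i) (f j) = 0 := by
      rw [← inner_smul_right, ← hb j hj, b.inner_eq_zero hij]
    simpa [hj] using hbij

theorem exists_orthonormalBasis_inner_map_eq_zero (T : E →ₗ[𝕜] F) {m n : ℕ}
    (hm : Module.finrank 𝕜 F = m) (hn : Module.finrank 𝕜 E = n) :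
    ∃ (u : OrthonormalBasis (Fin m) 𝕜 F) (v : OrthonormalBasis (Fin n) 𝕜 E),
      ∀ (i : Fin m) (j : Fin n), (i : ℕ) ≠ j → inner 𝕜 (u i) (T (v j)) = 0 := by
  let v := T.isSymmetric_adjoint_comp_self.eigenvectorBasis hn
  let f : Fin m → F := fun i => if h : (i : ℕ) < n then T (v ⟨i, h⟩) else 0
  have hf : Pairwise fun i j => inner 𝕜 (f i) (f j) = 0 := by
    intro i j hij
    by_cases hi : (i : ℕ) < n <;> by_cases hj : (j : ℕ) < n <;>
      simp [f, v, hi, hj, inner_map_eigenvectorBasis_adjoint_comp_self, Fin.val_inj, hij]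
  obtain ⟨u, hu⟩ := exists_orthonormalBasis_inner_eq_zero (by simpa using hm) hf
  refine ⟨u, v, fun i j hij => ?_⟩
  rcases lt_or_ge (j : ℕ) m with hj | hj
  · simpa [f] using hu (i := i) (j := ⟨j, hj⟩) (Fin.ne_of_val_ne hij)
  · rw [map_eigenvectorBasis_adjoint_comp_self_eq_zero T hn j (hm.trans_le hj), inner_zero_right]

theorem exists_unitary_mul_mul_star_eq {m n : ℕ} (A : Matrix (Fin m) (Fin n) 𝕜) :
    ∃ U ∈ Matrix.unitaryGroup (Fin m) 𝕜, ∃ S : Matrix (Fin m) (Fin n) 𝕜,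
      ∃ V ∈ Matrix.unitaryGroup (Fin n) 𝕜,
        A = U * S * star V ∧ ∀ (i : Fin m) (j : Fin n), (i : ℕ) ≠ j → S i j = 0 := by
  let T := A.toEuclideanLin
  obtain ⟨u, v, huv⟩ :=
    exists_orthonormalBasis_inner_map_eq_zero T finrank_euclideanSpace_fin
      finrank_euclideanSpace_fin
  let em := EuclideanSpace.basisFun (Fin m) 𝕜
  let en := EuclideanSpace.basisFun (Fin n) 𝕜
  refine ⟨_, em.toMatrix_orthonormalBasis_mem_unitary u,
    LinearMap.toMatrix v.toBasis u.toBasis T, _, en.toMatrix_orthonormalBasis_mem_unitary v,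
    ?_, fun i j hij => ?_⟩
  · have hV : star (en.toBasis.toMatrix v) = v.toBasis.toMatrix en := by
      ext i j
      simp [Module.Basis.toMatrix_apply, OrthonormalBasis.repr_apply_apply]
    have hA : LinearMap.toMatrix en.toBasis em.toBasis T = A :=
      LinearMap.toMatrix_toLin _ _ A
    rw [hV, ← hA]
    exact (basis_toMatrix_mul_linearMap_toMatrix_mul_basis_toMatrix
      en.toBasis v.toBasis em.toBasis u.toBasis T).symm
  · simpa [LinearMap.toMatrix_apply, OrthonormalBasis.repr_apply_apply] using huv i j hij

end SingularValueDecomposition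

section EvenConvolution

theorem sum_even_mul_cos_add {G : Type*} [AddCommGroup G] [Fintype G] {f : G → ℝ} (hf : f.Even)
    (φ : G →+ Real.Angle) (α : Real.Angle) (x : G) :
    ∑ y, f (x - y) * (φ y + α).cos = (∑ y, f y * (φ y).cos) * (φ x + α).cos := by
  have hodd : ∑ y, f y * (φ y).sin = 0 :=
    Function.Odd.sum_eq_zero fun y => by simp [hf y]
  calc ∑ y, f (x - y) * (φ y + α).cos
      = ∑ y, f y * (φ (x - y) + α).cos :=
        Fintype.sum_equiv (Equiv.subLeft x) _ _ fun y => by simp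
    _ = ∑ y, (f y * (φ y).cos * (φ x + α).cos + f y * (φ y).sin * (φ x + α).sin) := by
        refine Finset.sum_congr rfl fun y _ => ?_
        have hangle : φ (x - y) + α = φ x + α + -φ y := by rw [map_sub]; abel
        rw [hangle, Real.Angle.cos_add, Real.Angle.cos_neg, Real.Angle.sin_neg]
        ring
    _ = (∑ y, f y * (φ y).cos) * (φ x + α).cos := by
        rw [Finset.sum_add_distrib, ← Finset.sum_mul, ← Finset.sum_mul, hodd, zero_mul, add_zero]

theorem sum_zmod_eq_sum_range {M : Type*} [AddCommMonoid M] (N : ℕ) [NeZero N] (f : ZMod N → M) :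
    ∑ x, f x = ∑ i ∈ Finset.range N, f i := by
  obtain ⟨N, rfl⟩ := Nat.exists_eq_succ_of_ne_zero (NeZero.ne N)
  rw [Finset.sum_range]
  exact Finset.sum_congr rfl fun x _ => congrArg f (ZMod.natCast_zmod_val (n := N + 1) x).symm

theorem sum_zmod_two_mul {M : Type*} [AddCommMonoid M] (n : ℕ) [NeZero n]
    (f : ZMod (2 * n) → M) : ∑ x, f x = ∑ i : Fin n, (f (i : ℕ) + f (-1 - (i : ℕ))) := by
  have hreflect : ∑ i ∈ Finset.range n, f (n + i : ℕ) = ∑ i ∈ Finset.range n, f (-1 - i) := by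
    rw [← Finset.sum_range_reflect]
    refine Finset.sum_congr rfl fun i hi => congrArg f ?_
    have hsum : n + (n - 1 - i) + (1 + i) = 2 * n := by grind
    have hcast := congrArg (Nat.cast (R := ZMod (2 * n))) hsum
    rw [ZMod.natCast_self] at hcast
    push_cast at hcast ⊢
    linear_combination hcast
  rw [sum_zmod_eq_sum_range, Finset.sum_congr (by rw [two_mul]) fun _ _ => rfl,
    Finset.sum_range_add, hreflect, ← Finset.sum_add_distrib, Finset.sum_range]

end EvenConvolution

section ToeplitzPlusHankel

variable {n : ℕ}

/-- The even function on the cycle `ℤ/2n` that takes the value `v j` at `±j` for `j < n` and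
vanishes at `n`. -/
def evenExtension (v : Fin n → ℝ) (x : ZMod (2 * n)) : ℝ :=
  if h : x.valMinAbs.natAbs < n then v ⟨x.valMinAbs.natAbs, h⟩ else 0

theorem even_evenExtension (v : Fin n → ℝ) : (evenExtension v).Even := fun x => by
  simp only [evenExtension, ZMod.natAbs_valMinAbs_neg]

theorem evenExtension_intCast [NeZero n] (v : Fin n → ℝ) {z : ℤ} (hz : -n < z) (hzn : z ≤ n) :
    evenExtension v z = if h : z.natAbs < n then v ⟨z.natAbs, h⟩ else 0 := by
  have hval : (z : ZMod (2 * n)).valMinAbs = z :=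
    (ZMod.valMinAbs_spec _ _).2 ⟨rfl, by push_cast; constructor <;> linarith⟩
  simp only [evenExtension, hval]

theorem thMat_apply (v : Fin n → ℝ) (p q : Fin n) :
    thMat v p q =
      evenExtension v ((p : ℕ) - (q : ℕ)) + evenExtension v ((p : ℕ) + 1 + (q : ℕ)) := by
  have : NeZero n := ⟨p.pos.ne'⟩
  have hp := p.isLt
  have hq := q.isLt
  have hdist : (p - q : ℤ).natAbs = Nat.dist p q := by grind [Nat.dist]
  have htoeplitz := evenExtension_intCast v (z := p - q) (by lia) (by lia)
  rw [dif_pos (by lia)] at htoeplitz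
  push_cast at htoeplitz
  simp only [thMat, Matrix.of_apply, htoeplitz, hdist]
  congr 1
  rcases le_or_gt (p + q + 1 : ℕ) n with hle | hgt
  · have hhankel := evenExtension_intCast v (z := p + 1 + q) (by lia) (by lia)
    push_cast at hhankel
    grind
  · have hhankel := evenExtension_intCast v (z := p + 1 + q - (2 * n : ℕ)) (by lia) (by lia)
    rw [Int.cast_sub, Int.cast_natCast (2 * n), ZMod.natCast_self, sub_zero] at hhankel
    push_cast at hhankel
    grind

theorem sum_thMat_mul [NeZero n] (v : Fin n → ℝ) (p : Fin n) {c : ZMod (2 * n) → ℝ}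
    (hc : ∀ x, c (-1 - x) = c x) :
    ∑ q : Fin n, thMat v p q * c (q : ℕ) = ∑ x, evenExtension v ((p : ℕ) - x) * c x := by
  rw [sum_zmod_two_mul]
  refine Finset.sum_congr rfl fun q _ => ?_
  rw [thMat_apply, hc, add_mul]
  ring_nf

/-- The additive character `x ↦ kπx/n` of the cycle `ℤ/2n`, written as an angle. -/
def cycleAngle (n k : ℕ) [NeZero n] : ZMod (2 * n) →+ Real.Angle :=
  ZMod.lift (2 * n) ⟨zmultiplesHom _ ((k * Real.pi / n : ℝ) : Real.Angle), by
    have : (n : ℝ) ≠ 0 := NeZero.ne _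
    rw [zmultiplesHom_apply, natCast_zsmul, ← Real.Angle.coe_nsmul, Real.Angle.coe_eq_zero_iff]
    exact ⟨k, by push_cast [nsmul_eq_mul, zsmul_eq_mul]; field_simp⟩⟩

theorem cycleAngle_natCast (n k q : ℕ) [NeZero n] :
    cycleAngle n k q = (q * (k * Real.pi / n) : ℝ) := by
  calc cycleAngle n k q = cycleAngle n k (q : ℤ) := by rw [Int.cast_natCast]
    _ = (q : ℤ) • ((k * Real.pi / n : ℝ) : Real.Angle) := ZMod.lift_coe _ _ _
    _ = (q * (k * Real.pi / n) : ℝ) := by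
      rw [natCast_zsmul, ← Real.Angle.coe_nsmul, nsmul_eq_mul]

theorem cos_cycleAngle_reflect (n k : ℕ) [NeZero n] (x : ZMod (2 * n)) :
    (cycleAngle n k (-1 - x) + (k * Real.pi / (2 * n) : ℝ)).cos =
      (cycleAngle n k x + (k * Real.pi / (2 * n) : ℝ)).cos := by
  have hone : cycleAngle n k 1 = (k * Real.pi / (2 * n) : ℝ) + (k * Real.pi / (2 * n) : ℝ) := by
    rw [← Nat.cast_one, cycleAngle_natCast, ← Real.Angle.coe_add]
    congr 1
    field_simp
    norm_num
  rw [← Real.Angle.cos_neg, map_sub, map_neg, hone]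
  congr 1
  abel

theorem dctMatrix_eq_mul_cos_cycleAngle [NeZero n] (k q : Fin n) :
    dctMatrix n k q = √((2 - if (k : ℕ) = 0 then 1 else 0) / n) *
      (cycleAngle n k (q : ℕ) + (k * Real.pi / (2 * n) : ℝ)).cos := by
  rw [cycleAngle_natCast, ← Real.Angle.coe_add, Real.Angle.cos_coe, dctMatrix, of_apply]
  congr 2
  have : (n : ℝ) ≠ 0 := NeZero.ne _
  field_simp

theorem exists_thMat_mul_transpose_dctMatrix_eq (v : Fin n → ℝ) :
    ∃ d : Fin n → ℝ, thMat v * (dctMatrix n)ᵀ = (dctMatrix n)ᵀ * diagonal d := by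
  rcases Nat.eq_zero_or_pos n with rfl | hn
  · exact ⟨0, Subsingleton.elim _ _⟩
  have : NeZero n := ⟨hn.ne'⟩
  refine ⟨fun k => ∑ x, evenExtension v x * (cycleAngle n k x).cos, ?_⟩
  ext p k
  have heigen := (sum_thMat_mul v p (c := fun x => (cycleAngle n k x + _).cos)
    (cos_cycleAngle_reflect n k)).trans (sum_even_mul_cos_add (even_evenExtension v) _ _ _)
  rw [mul_diagonal]
  simp only [mul_apply, transpose_apply, dctMatrix_eq_mul_cos_cycleAngle,
    mul_left_comm (thMat v p _), ← Finset.mul_sum, heigen]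
  ring

end ToeplitzPlusHankel

section DiscreteCosineTransform

theorem two_mul_sin_mul_sum_cos (n : ℕ) (θ : ℝ) :
    2 * Real.sin θ * ∑ q : Fin n, Real.cos ((2 * q + 1) * θ) = Real.sin (2 * n * θ) := by
  rw [Fin.sum_univ_eq_sum_range fun q => Real.cos ((2 * q + 1) * θ)]
  induction n with
  | zero => simp
  | succ n ih =>
    have hsub : 2 * (n : ℝ) * θ = (2 * n + 1) * θ - θ := by ring
    have hadd : 2 * ((n + 1 : ℕ) : ℝ) * θ = (2 * n + 1) * θ + θ := by push_cast; ring
    rw [Finset.sum_range_succ, mul_add, ih, hsub, hadd, Real.sin_sub, Real.sin_add]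
    ring

theorem sum_cos_two_mul_add_one_mul_eq_zero {n : ℕ} {m : ℤ} (hm : m ≠ 0) (hmn : |m| < 2 * n) :
    ∑ q : Fin n, Real.cos ((2 * q + 1) * (m * Real.pi / (2 * n))) = 0 := by
  have hn : (0 : ℝ) < 2 * n := by exact_mod_cast (abs_nonneg m).trans_lt hmn
  have hfrac : |(m : ℝ) / (2 * n)| < 1 := by
    rw [abs_div, abs_of_pos hn, div_lt_one hn]
    exact_mod_cast hmn
  have hsin : Real.sin (m * Real.pi / (2 * n)) ≠ 0 := by
    rw [mul_div_right_comm, ne_eq, Real.sin_eq_zero_iff_of_lt_of_lt]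
    · exact mul_ne_zero (div_ne_zero (mod_cast hm) hn.ne') Real.pi_ne_zero
    · nlinarith [(abs_lt.1 hfrac).1, Real.pi_pos]
    · nlinarith [(abs_lt.1 hfrac).2, Real.pi_pos]
  have hsum := two_mul_sin_mul_sum_cos n (m * Real.pi / (2 * n))
  rw [mul_div_cancel₀ _ hn.ne', Real.sin_int_mul_pi] at hsum
  exact (mul_eq_zero.1 hsum).resolve_left (mul_ne_zero two_ne_zero hsin)

theorem sum_cos_mul_cos (n : ℕ) (k l : Fin n) :
    ∑ q : Fin n, Real.cos (k * (2 * q + 1) * Real.pi / (2 * n)) *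
        Real.cos (l * (2 * q + 1) * Real.pi / (2 * n)) =
      if k = l then if (k : ℕ) = 0 then (n : ℝ) else n / 2 else 0 := by
  have hproduct (q : Fin n) : Real.cos (k * (2 * q + 1) * Real.pi / (2 * n)) *
      Real.cos (l * (2 * q + 1) * Real.pi / (2 * n)) =
        (Real.cos ((2 * q + 1) * ((k - l : ℤ) * Real.pi / (2 * n))) +
          Real.cos ((2 * q + 1) * ((k + l : ℤ) * Real.pi / (2 * n)))) / 2 := by
    rw [eq_div_iff two_ne_zero, mul_comm, ← mul_assoc, Real.two_mul_cos_mul_cos]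
    push_cast
    ring_nf
  have hk := k.isLt
  have hl := l.isLt
  rw [Finset.sum_congr rfl fun q _ => hproduct q, ← Finset.sum_div, Finset.sum_add_distrib]
  split_ifs with hkl hk0
  · simp [← hkl, hk0]
  · rw [sum_cos_two_mul_add_one_mul_eq_zero (m := k + l) (by grind) (by grind)]
    simp [hkl]
  · rw [sum_cos_two_mul_add_one_mul_eq_zero (m := k - l) (by grind) (by grind),
      sum_cos_two_mul_add_one_mul_eq_zero (m := k + l) (by grind) (by grind)]
    simp

theorem dctMatrix_mul_transpose_self (n : ℕ) : dctMatrix n * (dctMatrix n)ᵀ = 1 := by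
  ext k l
  have hn : (n : ℝ) ≠ 0 := Nat.cast_ne_zero.2 k.pos.ne'
  simp only [mul_apply, transpose_apply, dctMatrix, of_apply, mul_mul_mul_comm _ (Real.cos _),
    ← Finset.mul_sum, sum_cos_mul_cos, one_apply]
  rcases eq_or_ne k l with rfl | hkl
  · rw [Real.mul_self_sqrt (by split_ifs <;> positivity)]
    split_ifs <;> field_simp <;> norm_num
  · simp [hkl]

theorem transpose_dctMatrix_mul_self (n : ℕ) : (dctMatrix n)ᵀ * dctMatrix n = 1 :=
  mul_eq_one_comm.1 (dctMatrix_mul_transpose_self n)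

theorem dctMatrix_apply_zero_pos {n : ℕ} (k : Fin n) : 0 < dctMatrix n k ⟨0, k.pos⟩ := by
  have hn : (0 : ℝ) < n := Nat.cast_pos.2 k.pos
  have hk : (k : ℝ) / n < 1 := (div_lt_one hn).2 (Nat.cast_lt.2 k.isLt)
  have hangle : (k : ℝ) * (2 * (0 : ℕ) + 1) * Real.pi / (2 * n) = k / n * (Real.pi / 2) := by
    field_simp
    simp
  rw [dctMatrix, of_apply, hangle]
  refine mul_pos (Real.sqrt_pos.2 (div_pos (by split_ifs <;> norm_num) hn))
    (Real.cos_pos_of_mem_Ioo ⟨?_, ?_⟩)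
  · linarith [show 0 ≤ (k : ℝ) / n * (Real.pi / 2) by positivity, Real.pi_pos]
  · nlinarith [Real.pi_pos]

end DiscreteCosineTransform

section Transform

variable {n : ℕ}

theorem isUnit_Wdiag (n : ℕ) : IsUnit (Wdiag n) := by
  rw [Wdiag, isUnit_diagonal, Pi.isUnit_iff]
  exact fun k => (dctMatrix_apply_zero_pos k).ne'.isUnit

theorem Wdiag_mul_transformM (n : ℕ) : Wdiag n * transformM n = dctMatrix n * (1 + upshift n) := by
  rw [transformM, Matrix.mul_assoc,
    mul_nonsing_inv_cancel_left _ _ ((isUnit_iff_isUnit_det _).1 (isUnit_Wdiag n))]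

theorem isUnit_one_add_upshift (n : ℕ) : IsUnit (1 + upshift n) := by
  rw [isUnit_iff_isUnit_det, det_of_isUpperTriangular]
  · simp [upshift]
  · intro i j (hji : j < i)
    rw [Matrix.add_apply, one_apply_ne hji.ne', zero_add]
    exact if_neg (by lia)

theorem isUnit_transformM (n : ℕ) : IsUnit (transformM n) :=
  ((isUnit_nonsing_inv_iff.2 (isUnit_Wdiag n)).mul
    (.of_mul_eq_one _ (dctMatrix_mul_transpose_self n))).mul (isUnit_one_add_upshift n)

theorem one_add_upshift_mulVec_apply (v : Fin n → ℝ) (p : Fin n) :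
    ((1 + upshift n) *ᵥ v) p = thMat v p ⟨0, p.pos⟩ := by
  have hshift : (upshift n *ᵥ v) p = if h : (p : ℕ) + 1 < n then v ⟨p + 1, h⟩ else 0 := by
    simp only [mulVec, dotProduct, upshift, of_apply, ite_mul, one_mul, zero_mul]
    split_ifs with h
    · rw [Finset.sum_eq_single ⟨p + 1, h⟩] <;> grind
    · exact Finset.sum_eq_zero fun j _ => if_neg (by grind)
  rw [add_mulVec, one_mulVec, Pi.add_apply, hshift]
  simp only [thMat, of_apply, Nat.dist]
  grind

theorem dctMatrix_mul_thMat (v : Fin n → ℝ) :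
    dctMatrix n * thMat v = diagonal (transformM n *ᵥ v) * dctMatrix n := by
  obtain ⟨d, hd⟩ := exists_thMat_mul_transpose_dctMatrix_eq v
  have hconj : dctMatrix n * thMat v = diagonal d * dctMatrix n := by
    rw [← Matrix.mul_one (thMat v), ← transpose_dctMatrix_mul_self, ← Matrix.mul_assoc (thMat v),
      hd, Matrix.mul_assoc, ← Matrix.mul_assoc, dctMatrix_mul_transpose_self, Matrix.one_mul]
  -- The first column of `thMat v` is `(1 + Z) v`, so the first column of `hconj` determines `d`.
  have hfirst : Wdiag n *ᵥ (transformM n *ᵥ v) = Wdiag n *ᵥ d := by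
    ext k
    calc (Wdiag n *ᵥ (transformM n *ᵥ v)) k
        = (dctMatrix n *ᵥ ((1 + upshift n) *ᵥ v)) k := by
          rw [mulVec_mulVec, Wdiag_mul_transformM, mulVec_mulVec]
      _ = (dctMatrix n * thMat v) k ⟨0, k.pos⟩ := by
          rw [funext (one_add_upshift_mulVec_apply v)]
          rfl
      _ = (Wdiag n *ᵥ d) k := by
          rw [hconj, diagonal_mul, Wdiag, mulVec_diagonal, mul_comm]
  rw [hconj, mulVec_injective_of_isUnit (isUnit_Wdiag n) hfirst]

end Transform

section KroneckerSum

variable {κ ι m n p R : Type*} [Fintype κ] [Fintype ι] [DecidableEq ι] [Fintype n]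
  [CommSemiring R] {P : κ → Matrix ι ι R}

theorem sum_kronecker_mul_sum_kronecker (hP : OrthogonalIdempotents P) (X : κ → Matrix m n R)
    (Y : κ → Matrix n p R) :
    (∑ k, P k ⊗ₖ X k) * ∑ k, P k ⊗ₖ Y k = ∑ k, P k ⊗ₖ (X k * Y k) := by
  rw [Matrix.sum_mul]
  refine Finset.sum_congr rfl fun k _ => ?_
  rw [Matrix.mul_sum, Finset.sum_eq_single k (fun l _ hlk => ?_) (by simp),
    ← mul_kronecker_mul, hP.idem k]
  rw [← mul_kronecker_mul, hP.ortho hlk.symm, zero_kronecker]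

theorem sum_kronecker_one [DecidableEq m] (hP : CompleteOrthogonalIdempotents P) :
    ∑ k, P k ⊗ₖ (1 : Matrix m m R) = 1 := by
  rw [← one_kronecker_one, ← hP.complete]
  ext
  simp [Matrix.sum_apply, Finset.sum_mul]

end KroneckerSum

section Tensor

variable {n n₁ n₂ n₃ : ℕ}

/-- The orthogonal projection of `ℝⁿ` onto the line spanned by the `k`-th discrete cosine. -/
def dctProjection (n : ℕ) (k : Fin n) : Matrix (Fin n) (Fin n) ℝ :=
  vecMulVec (dctMatrix n k) (dctMatrix n k)

theorem transpose_dctProjection (k : Fin n) : (dctProjection n k)ᵀ = dctProjection n k :=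
  transpose_vecMulVec _ _

theorem completeOrthogonalIdempotents_dctProjection (n : ℕ) :
    CompleteOrthogonalIdempotents (dctProjection n) := by
  have hmul (k l : Fin n) : dctProjection n k * dctProjection n l =
      (1 : Matrix (Fin n) (Fin n) ℝ) k l • vecMulVec (dctMatrix n k) (dctMatrix n l) := by
    rw [dctProjection, dctProjection, vecMulVec_mul_vecMulVec, vecMulVec_smul,
      ← dctMatrix_mul_transpose_self]
    rfl
  refine ⟨⟨fun k => ?_, fun k l hkl => ?_⟩, ?_⟩
  · rw [IsIdempotentElem, hmul, one_apply_eq, one_smul, dctProjection]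
  · simp only [hmul, one_apply_ne hkl, zero_smul]
  · rw [← transpose_dctMatrix_mul_self]
    ext i j
    simp [Matrix.sum_apply, mul_apply, dctProjection, vecMulVec_apply]

theorem thMat_eq_sum_smul_dctProjection (v : Fin n → ℝ) :
    thMat v = ∑ k, (transformM n *ᵥ v) k • dctProjection n k := by
  rw [← Matrix.one_mul (thMat v), ← transpose_dctMatrix_mul_self, Matrix.mul_assoc,
    dctMatrix_mul_thMat]
  ext p q
  simp only [Matrix.sum_apply, Matrix.smul_apply, mul_apply (N := _ * _), diagonal_mul,
    transpose_apply, dctProjection, vecMulVec_apply, smul_eq_mul, mul_left_comm]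

theorem tmat_apply (A : Fin n₃ → Matrix (Fin n₁) (Fin n₂) ℝ) (p q : Fin n₃) (i : Fin n₁)
    (j : Fin n₂) : tmat A (p, i) (q, j) = thMat (fun k => A k i j) p q := by
  simp only [tmat, hankelPart, thMat, of_apply, Matrix.add_apply]
  split_ifs <;> rfl

theorem tSlice_apply (A : Fin n₃ → Matrix (Fin n₁) (Fin n₂) ℝ) (k : Fin n₃) (i : Fin n₁)
    (j : Fin n₂) : tSlice A k i j = (transformM n₃ *ᵥ fun l => A l i j) k := by
  simp [tSlice, Matrix.sum_apply, mulVec, dotProduct]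

theorem tmat_eq_sum_kronecker (A : Fin n₃ → Matrix (Fin n₁) (Fin n₂) ℝ) :
    tmat A = ∑ k, dctProjection n₃ k ⊗ₖ tSlice A k := by
  ext ⟨p, i⟩ ⟨q, j⟩
  simp only [tmat_apply, thMat_eq_sum_smul_dctProjection, Matrix.sum_apply, Matrix.smul_apply,
    kroneckerMap_apply, tSlice_apply, smul_eq_mul, mul_comm]

theorem tmat_mul_tmat {m : ℕ} {A : Fin n₃ → Matrix (Fin n₁) (Fin m) ℝ}
    {B : Fin n₃ → Matrix (Fin m) (Fin n₂) ℝ} {C : Fin n₃ → Matrix (Fin n₁) (Fin n₂) ℝ}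
    (h : ∀ k, tSlice A k * tSlice B k = tSlice C k) : tmat A * tmat B = tmat C := by
  simp only [tmat_eq_sum_kronecker, sum_kronecker_mul_sum_kronecker
    (completeOrthogonalIdempotents_dctProjection n₃).toOrthogonalIdempotents, h]

theorem tSlice_sTranspose (A : Fin n₃ → Matrix (Fin n₁) (Fin n₂) ℝ) (k : Fin n₃) :
    tSlice (sTranspose A) k = (tSlice A k)ᵀ := by
  ext i j
  simp only [tSlice_apply, sTranspose, transpose_apply]

theorem tmat_sTranspose (A : Fin n₃ → Matrix (Fin n₁) (Fin n₂) ℝ) :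
    tmat (sTranspose A) = (tmat A)ᵀ := by
  simp only [tmat_eq_sum_kronecker, tSlice_sTranspose, transpose_sum, ← kroneckerMap_transpose,
    transpose_dctProjection]

theorem transpose_tmat_mul_tmat_eq_one {U : Fin n₃ → Matrix (Fin n₁) (Fin n₁) ℝ}
    (hU : ∀ k, (tSlice U k)ᵀ * tSlice U k = 1) : (tmat U)ᵀ * tmat U = 1 := by
  rw [← tmat_sTranspose]
  simp only [tmat_eq_sum_kronecker, sum_kronecker_mul_sum_kronecker
    (completeOrthogonalIdempotents_dctProjection n₃).toOrthogonalIdempotents, tSlice_sTranspose, hU,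
    sum_kronecker_one (completeOrthogonalIdempotents_dctProjection n₃)]

theorem tSlice_surjective :
    Function.Surjective (tSlice : (Fin n₃ → Matrix (Fin n₁) (Fin n₂) ℝ) → _) := by
  intro X
  choose v hv using fun i j =>
    mulVec_surjective_iff_isUnit.2 (isUnit_transformM n₃) fun k => X k i j
  refine ⟨fun k => of fun i j => v i j k, ?_⟩
  ext k i j
  simpa only [tSlice_apply, of_apply] using congrFun (hv i j) k

theorem apply_eq_zero_of_tSlice_apply_eq_zero {S : Fin n₃ → Matrix (Fin n₁) (Fin n₂) ℝ}
    {i : Fin n₁} {j : Fin n₂} (h : ∀ k, tSlice S k i j = 0) (k : Fin n₃) : S k i j = 0 := by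
  have htube : (transformM n₃ *ᵥ fun l => S l i j) = transformM n₃ *ᵥ 0 := by
    ext k
    rw [← tSlice_apply, h, mulVec_zero, Pi.zero_apply]
  exact congrFun (mulVec_injective_of_isUnit (isUnit_transformM n₃) htube) k

end Tensor

/-- c-SVD: every tensor `A ∈ ℝ^{n1×n2×n3}` factors as `A = U ⋆_c S ⋆_c Vᵀ`
with `mat(U)`, `mat(V)` orthogonal and `S` f-diagonal. -/
theorem c_svd {n1 n2 n3 : ℕ} (A : Fin n3 → Matrix (Fin n1) (Fin n2) ℝ) :
    ∃ (U : Fin n3 → Matrix (Fin n1) (Fin n1) ℝ)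
      (S : Fin n3 → Matrix (Fin n1) (Fin n2) ℝ)
      (V : Fin n3 → Matrix (Fin n2) (Fin n2) ℝ),
      tmat A = tmat U * tmat S * tmat (sTranspose V) ∧
      (tmat U)ᵀ * tmat U = 1 ∧ (tmat V)ᵀ * tmat V = 1 ∧
      ∀ k, ∀ (i : Fin n1) (j : Fin n2), (i : ℕ) ≠ (j : ℕ) → S k i j = 0 := by
  choose U' hU' S' V' hV' hA hS' using fun k => exists_unitary_mul_mul_star_eq (tSlice A k)
  obtain ⟨U, rfl⟩ := tSlice_surjective U'
  obtain ⟨S, rfl⟩ := tSlice_surjective S'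
  obtain ⟨V, rfl⟩ := tSlice_surjective V'
  obtain ⟨US, hUS⟩ := tSlice_surjective fun k => tSlice U k * tSlice S k
  refine ⟨U, S, V, ?_, transpose_tmat_mul_tmat_eq_one fun k => mem_unitaryGroup_iff'.1 (hU' k),
    transpose_tmat_mul_tmat_eq_one fun k => mem_unitaryGroup_iff'.1 (hV' k),
    fun k i j hij => apply_eq_zero_of_tSlice_apply_eq_zero (fun k => hS' k i j hij) k⟩
  rw [tmat_mul_tmat fun k => (congrFun hUS k).symm, tmat_mul_tmat fun k => ?_]
  rw [hUS, tSlice_sTranspose]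
  exact (hA k).symm

end
end

section
/- Multi-rank bound for c-products with inner dimension k: if X ∈ ℝ^{n1×k×n3}, Y ∈ ℝ^{k×n2×n3}, and C ∈ ℝ^{n1×n2×n3} satisfies mat(C) = mat(X)·mat(Y), then every transformed slice of C has rank at most k: rank(C̃^{(i)}) ≤ k for all 1 ≤ i ≤ n3. -/
open Matrix BigOperators Kronecker

noncomputable section

/-!
Row `i` of the DCT matrix samples a cosine that is symmetric about `-1/2` and about `n - 1/2`.
Because of these reflections the Hankel part of `th(v)` supplies exactly the terms that the
Toeplitz part loses at the two ends, so the row is a common left eigenvector of all the matrices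
`th(v)`. The first column of `th(v)` is `(I + Z) v`, so comparing first entries shows that the
eigenvalue is `(M v)_i`. Since `mat(A)` is `th` applied to every tube of `A`, the block row
`C_n(i,:) ⊗ I` turns left multiplication by `mat(A)` into left multiplication by the transformed
slice of `A`. Hence `mat(C) = mat(X) mat(Y)` forces each transformed slice of `C` to be the product
of those of `X` and `Y`.
-/

/-- The point of `[0, n)` to which `x` is carried by the reflections `x ↦ -1 - x` and
`x ↦ 2n - 1 - x`; only meaningful for `-n ≤ x < 2n`, where one reflection suffices. -/
def reflectFold (n : ℕ) (x : ℤ) : ℤ :=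
  if x < 0 then -1 - x else if x < n then x else 2 * n - 1 - x

lemma reflectFold_nonneg {n : ℕ} {x : ℤ} (hx : x < 2 * n) : 0 ≤ reflectFold n x := by
  unfold reflectFold
  split_ifs <;> omega

lemma reflectFold_lt {n : ℕ} {x : ℤ} (hx : -n ≤ x) : reflectFold n x < n := by
  unfold reflectFold
  split_ifs <;> omega

lemma apply_reflectFold {α : Type*} {n : ℕ} {f : ℤ → α} (hleft : ∀ x, f (-1 - x) = f x)
    (hright : ∀ x, f (2 * n - 1 - x) = f x) (x : ℤ) : f (reflectFold n x) = f x := by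
  unfold reflectFold
  split_ifs
  exacts [hleft x, rfl, hright x]

lemma sum_mul_ite_eq_reflectFold {R : Type*} [NonAssocSemiring R] {n : ℕ} {f : ℤ → R}
    (hleft : ∀ x, f (-1 - x) = f x) (hright : ∀ x, f (2 * n - 1 - x) = f x) {x : ℤ}
    (hx : -n ≤ x) (hx' : x < 2 * n) :
    ∑ p : Fin n, f p * (if (p : ℤ) = reflectFold n x then 1 else 0) = f x := by
  obtain ⟨y, hy⟩ := Int.eq_ofNat_of_zero_le (reflectFold_nonneg hx')
  have hyn : y < n := by
    have := reflectFold_lt hx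
    omega
  rw [← apply_reflectFold hleft hright x, hy, Fintype.sum_eq_single ⟨y, hyn⟩]
  · simp
  · intro p hp
    have : (p : ℤ) ≠ y := fun h => hp (Fin.ext (by exact_mod_cast h))
    simp [this]

lemma thMat_eq_sum_single {n : ℕ} (v : Fin n → ℝ) :
    thMat v = ∑ t, v t • thMat (Pi.single t 1) := by
  ext p q
  simp only [thMat, Matrix.sum_apply, Matrix.smul_apply, Matrix.of_apply, smul_eq_mul, mul_add,
    Finset.sum_add_distrib]
  split_ifs <;> simp [Pi.single_apply]

lemma thMat_single_of_eq_zero {n : ℕ} {t : Fin n} (ht : (t : ℕ) = 0) :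
    thMat (Pi.single t 1) = 1 := by
  ext p q
  simp only [thMat, Matrix.of_apply, Matrix.one_apply, Pi.single_apply, Fin.ext_iff, Nat.dist, ht]
  split_ifs <;> first | contradiction | omega | simp

lemma thMat_single_apply_of_ne_zero {n : ℕ} {t : Fin n} (ht : (t : ℕ) ≠ 0) (p q : Fin n) :
    thMat (Pi.single t 1) p q =
      (if (p : ℤ) = reflectFold n (q + t) then 1 else 0) +
        (if (p : ℤ) = reflectFold n (q - t) then 1 else 0) := by
  simp only [thMat, Matrix.of_apply, Pi.single_apply, Fin.ext_iff, Nat.dist, reflectFold]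
  split_ifs <;> first | omega | simp

lemma sum_mul_thMat_single {n : ℕ} {f : ℤ → ℝ} (hleft : ∀ x, f (-1 - x) = f x)
    (hright : ∀ x, f (2 * n - 1 - x) = f x) {t : Fin n} (ht : (t : ℕ) ≠ 0) (q : Fin n) :
    ∑ p : Fin n, f p * thMat (Pi.single t 1) p q = f (q + t) + f (q - t) := by
  simp only [thMat_single_apply_of_ne_zero ht, mul_add, Finset.sum_add_distrib]
  rw [sum_mul_ite_eq_reflectFold hleft hright (by omega) (by omega),
    sum_mul_ite_eq_reflectFold hleft hright (by omega) (by omega)]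

lemma thMat_apply_zero {n : ℕ} (v : Fin n → ℝ) (p : Fin n) :
    thMat v p ⟨0, p.pos⟩ = ((1 + upshift n) *ᵥ v) p := by
  rw [add_mulVec, one_mulVec, Pi.add_apply]
  simp only [thMat, Matrix.of_apply, upshift, mulVec, dotProduct, ite_mul, one_mul, zero_mul]
  congr 1
  · simp [Nat.dist_zero_right]
  · split_ifs with hlt heq
    · rw [Fintype.sum_eq_single ⟨p + 1, hlt⟩]
      · simp
      · intro t ht
        exact if_neg fun h => ht (Fin.ext h.symm)
    · exact (Finset.sum_eq_zero fun t _ => if_neg (by omega)).symm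
    · omega

section DCT

variable {n : ℕ}

/-- The sequence on `ℤ` of which row `i` of the DCT matrix is, up to normalisation, the
restriction to `[0, n)`. -/
def dctCos (n i : ℕ) (x : ℤ) : ℝ :=
  Real.cos (i * (2 * x + 1) * Real.pi / (2 * n))

lemma dctCos_neg_one_sub (n i : ℕ) (x : ℤ) : dctCos n i (-1 - x) = dctCos n i x := by
  unfold dctCos
  rw [← Real.cos_neg]
  congr 1
  push_cast
  ring

lemma dctCos_two_mul_sub_one_sub (hn : n ≠ 0) (i : ℕ) (x : ℤ) :
    dctCos n i (2 * n - 1 - x) = dctCos n i x := by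
  unfold dctCos
  rw [← Real.cos_nat_mul_two_pi_sub _ i]
  congr 1
  push_cast
  field_simp
  ring

lemma dctCos_add_add_dctCos_sub (n i : ℕ) (q t : ℤ) :
    dctCos n i (q + t) + dctCos n i (q - t) =
      2 * Real.cos (i * t * Real.pi / n) * dctCos n i q := by
  simp only [dctCos, Real.two_mul_cos_mul_cos]
  rw [add_comm, ← Real.cos_neg (_ - _)]
  congr 2 <;> push_cast <;> ring

lemma dctCos_zero_pos {i : ℕ} (hi : i < n) : 0 < dctCos n i 0 := by
  have hn : (0 : ℝ) < n := by exact_mod_cast i.zero_le.trans_lt hi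
  have hi' : (i : ℝ) < n := by exact_mod_cast hi
  have hangle : (i : ℝ) * (2 * (0 : ℤ) + 1) * Real.pi / (2 * n) = i / n * (Real.pi / 2) := by
    push_cast
    field_simp
    ring
  rw [dctCos, hangle]
  refine Real.cos_pos_of_mem_Ioo ⟨?_, ?_⟩
  · have : 0 ≤ (i : ℝ) / n * (Real.pi / 2) := by positivity
    linarith [Real.pi_pos]
  · exact mul_lt_of_lt_one_left Real.pi_div_two_pos ((div_lt_one hn).2 hi')

lemma dctMatrix_apply (i j : Fin n) :
    dctMatrix n i j = √((2 - if (i : ℕ) = 0 then 1 else 0) / n) * dctCos n i j := by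
  simp [dctMatrix, dctCos]

lemma dctMatrix_apply_zero_ne_zero (i : Fin n) : dctMatrix n i ⟨0, i.pos⟩ ≠ 0 := by
  have hn : (0 : ℝ) < n := by exact_mod_cast i.pos
  have hscale : 0 < √((2 - if (i : ℕ) = 0 then 1 else 0) / (n : ℝ)) :=
    Real.sqrt_pos.2 (div_pos (by split_ifs <;> norm_num) hn)
  rw [dctMatrix_apply]
  exact (mul_pos hscale (dctCos_zero_pos i.isLt)).ne'

lemma exists_dctMatrix_vecMul_thMat_single (i t : Fin n) :
    ∃ μ : ℝ, dctMatrix n i ᵥ* thMat (Pi.single t 1) = μ • dctMatrix n i := by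
  by_cases ht : (t : ℕ) = 0
  · exact ⟨1, by rw [thMat_single_of_eq_zero ht, vecMul_one, one_smul]⟩
  · refine ⟨2 * Real.cos ((i : ℕ) * (t : ℤ) * Real.pi / n), funext fun q => ?_⟩
    have hsum := sum_mul_thMat_single (dctCos_neg_one_sub n i)
      (dctCos_two_mul_sub_one_sub i.pos.ne' i) ht q
    rw [dctCos_add_add_dctCos_sub] at hsum
    simp only [vecMul, dotProduct, Pi.smul_apply, smul_eq_mul, dctMatrix_apply, mul_assoc,
      ← Finset.mul_sum] at hsum ⊢
    rw [hsum]
    ring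

lemma exists_dctMatrix_vecMul_thMat (i : Fin n) (v : Fin n → ℝ) :
    ∃ μ : ℝ, dctMatrix n i ᵥ* thMat v = μ • dctMatrix n i := by
  choose μ hμ using exists_dctMatrix_vecMul_thMat_single i
  refine ⟨∑ t, v t * μ t, ?_⟩
  rw [thMat_eq_sum_single, vecMul_sum, Finset.sum_smul]
  exact Finset.sum_congr rfl fun t _ => by rw [vecMul_smul, hμ, smul_smul]

lemma transformM_mulVec_mul_dctMatrix_zero (i : Fin n) (v : Fin n → ℝ) :
    (transformM n *ᵥ v) i * dctMatrix n i ⟨0, i.pos⟩ =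
      (dctMatrix n i ᵥ* thMat v) ⟨0, i.pos⟩ := by
  have hunit : IsUnit (Wdiag n).det := by
    rw [Wdiag, det_diagonal]
    exact (Finset.prod_ne_zero_iff.2 fun j _ => dctMatrix_apply_zero_ne_zero j).isUnit
  have hW : Wdiag n * transformM n = dctMatrix n * (1 + upshift n) := by
    rw [transformM, Matrix.mul_assoc, mul_nonsing_inv_cancel_left _ _ hunit]
  calc (transformM n *ᵥ v) i * dctMatrix n i ⟨0, i.pos⟩
      = (Wdiag n *ᵥ (transformM n *ᵥ v)) i := by rw [Wdiag, mulVec_diagonal, mul_comm]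
    _ = (dctMatrix n *ᵥ ((1 + upshift n) *ᵥ v)) i := by
        rw [mulVec_mulVec, hW, mulVec_mulVec]
    _ = (dctMatrix n i ᵥ* thMat v) ⟨0, i.pos⟩ := by
        simp only [mulVec, vecMul, dotProduct, thMat_apply_zero]

theorem dctMatrix_vecMul_thMat (i : Fin n) (v : Fin n → ℝ) :
    dctMatrix n i ᵥ* thMat v = (transformM n *ᵥ v) i • dctMatrix n i := by
  obtain ⟨μ, hμ⟩ := exists_dctMatrix_vecMul_thMat i v
  have hμ_eq : (transformM n *ᵥ v) i = μ := by
    refine mul_right_cancel₀ (dctMatrix_apply_zero_ne_zero i) ?_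
    rw [transformM_mulVec_mul_dctMatrix_zero, hμ, Pi.smul_apply, smul_eq_mul]
  rw [hμ_eq, hμ]

/-- The block row `C_n(i,:) ⊗ I` built from row `i` of the DCT matrix. -/
def dctBlockRow (m : Type*) [DecidableEq m] (i : Fin n) : Matrix m (Fin n × m) ℝ :=
  Matrix.of fun a pb => dctMatrix n i pb.1 * (1 : Matrix m m ℝ) a pb.2

lemma mul_dctBlockRow_apply {l m : Type*} [Fintype m] [DecidableEq m] (G : Matrix l m ℝ)
    (i q : Fin n) (a : l) (b : m) :
    (G * dctBlockRow m i) a (q, b) = G a b * dctMatrix n i q := by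
  simp [Matrix.mul_apply, dctBlockRow, Matrix.one_apply]

lemma mul_dctBlockRow_injective {l m : Type*} [Fintype m] [DecidableEq m] (i : Fin n) :
    Function.Injective fun G : Matrix l m ℝ => G * dctBlockRow m i := by
  intro G H hGH
  ext a b
  have hentry := congrFun (congrFun hGH a) (⟨0, i.pos⟩, b)
  simp only [mul_dctBlockRow_apply] at hentry
  exact mul_right_cancel₀ (dctMatrix_apply_zero_ne_zero i) hentry

end DCT

section Tensor

variable {n1 n2 n3 : ℕ}

lemma tmat_apply_s9 (A : Fin n3 → Matrix (Fin n1) (Fin n2) ℝ) (p q : Fin n3) (a : Fin n1)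
    (b : Fin n2) : tmat A (p, a) (q, b) = thMat (fun t => A t a b) p q := by
  simp only [tmat, thMat, hankelPart, Matrix.of_apply, Matrix.add_apply]
  split_ifs <;> rfl

lemma tSlice_apply_s9 (A : Fin n3 → Matrix (Fin n1) (Fin n2) ℝ) (i : Fin n3) (a : Fin n1)
    (b : Fin n2) : tSlice A i a b = (transformM n3 *ᵥ fun t => A t a b) i := by
  simp [tSlice, mulVec, dotProduct, Matrix.sum_apply]

theorem dctBlockRow_mul_tmat (A : Fin n3 → Matrix (Fin n1) (Fin n2) ℝ) (i : Fin n3) :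
    dctBlockRow (Fin n1) i * tmat A = tSlice A i * dctBlockRow (Fin n2) i := by
  ext a ⟨q, b⟩
  calc (dctBlockRow (Fin n1) i * tmat A) a (q, b)
      = (dctMatrix n3 i ᵥ* thMat fun t => A t a b) q := by
        simp [Matrix.mul_apply, dctBlockRow, Fintype.sum_prod_type, Matrix.one_apply, tmat_apply_s9,
          vecMul, dotProduct]
    _ = tSlice A i a b * dctMatrix n3 i q := by
        rw [dctMatrix_vecMul_thMat, Pi.smul_apply, smul_eq_mul, tSlice_apply_s9]
    _ = (tSlice A i * dctBlockRow (Fin n2) i) a (q, b) := (mul_dctBlockRow_apply ..).symm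

theorem tSlice_eq_mul_of_tmat_eq_mul {k : ℕ} {X : Fin n3 → Matrix (Fin n1) (Fin k) ℝ}
    {Y : Fin n3 → Matrix (Fin k) (Fin n2) ℝ} {C : Fin n3 → Matrix (Fin n1) (Fin n2) ℝ}
    (h : tmat C = tmat X * tmat Y) (i : Fin n3) : tSlice C i = tSlice X i * tSlice Y i := by
  apply mul_dctBlockRow_injective i
  calc tSlice C i * dctBlockRow (Fin n2) i
      = dctBlockRow (Fin n1) i * (tmat X * tmat Y) := by rw [← dctBlockRow_mul_tmat, h]
    _ = tSlice X i * (dctBlockRow (Fin k) i * tmat Y) := by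
        rw [← Matrix.mul_assoc, dctBlockRow_mul_tmat, Matrix.mul_assoc]
    _ = tSlice X i * tSlice Y i * dctBlockRow (Fin n2) i := by
        rw [dctBlockRow_mul_tmat, Matrix.mul_assoc]

end Tensor

/-- multi-rank bound for c-products with inner dimension `k`: if
`mat(C) = mat(X) · mat(Y)` with `X ∈ ℝ^{n1×k×n3}` and `Y ∈ ℝ^{k×n2×n3}`, then every
transformed slice of `C` has rank at most `k`. -/
theorem multiRank_bound {n1 n2 k n3 : ℕ}
    (X : Fin n3 → Matrix (Fin n1) (Fin k) ℝ) (Y : Fin n3 → Matrix (Fin k) (Fin n2) ℝ)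
    (C : Fin n3 → Matrix (Fin n1) (Fin n2) ℝ)
    (h : tmat C = tmat X * tmat Y) :
    ∀ i, (tSlice C i).rank ≤ k := by
  intro i
  calc (tSlice C i).rank = (tSlice X i * tSlice Y i).rank := by
        rw [tSlice_eq_mul_of_tmat_eq_mul h i]
    _ ≤ (tSlice X i).rank := rank_mul_le_left _ _
    _ ≤ k := rank_le_width _

end
end
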